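/- Let b be a graph over a countably infinite set X and q : X → ℝ a potential. Let f, g ∈ F(X) be strictly positive. Then (fg)^{1/2} ∈ F(X), all the series below converge absolutely, and for all x ∈ X: 2·(fg)^{1/2}(x)·H[(fg)^{1/2}](x) = f(x)·Hg(x) + g(x)·Hf(x) + Σ_{y∈X} b(x,y)·[g(x)^{1/2}(f(x)^{1/2} − f(y)^{1/2}) − f(x)^{1/2}(g(x)^{1/2} − g(y)^{1/2})]². -/

import Mathlib

/-- `f` belongs to `F(X)`: `∑_y b x y |f y| < ∞` for every `x`. -/
def memF {X : Type} (b : X → X → ℝ) (f : X → ℝ) : Prop :=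
  ∀ x : X, Summable fun y => b x y * |f y|

/-- The formal graph Laplacian `L f x = ∑_y b x y (f x - f y)`. -/
noncomputable def lap {X : Type} (b : X → X → ℝ) (f : X → ℝ) (x : X) : ℝ :=
  ∑' y : X, b x y * (f x - f y)

/-- The formal Schrödinger operator `H = L + q`. -/
noncomputable def schrod {X : Type} (b : X → X → ℝ) (q : X → ℝ) (f : X → ℝ) (x : X) : ℝ :=
  lap b f x + q x * f x

/-- The quadratic form `h(φ)` of `H = L + q`. -/
noncomputable def quadForm {X : Type} (b : X → X → ℝ) (q : X → ℝ) (φ : X → ℝ) : ℝ :=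
  (1 / 2) * (∑' p : X × X, b p.1 p.2 * (φ p.1 - φ p.2) ^ 2) + ∑' x : X, q x * φ x ^ 2

/-!
Since `√c (√a - √a') - √a (√c - √c') = √a √c' - √c √a'`, its square is
`a c' + c a' - 2 √(a c) √(a' c')`, which is a linear combination of the differences `a - a'`,
`c - c'` and `√(a c) - √(a' c')`. Summing against `b x` turns these differences into Laplacians,
which converge because `√(f g) ≤ |f| + |g|`. The potential contributes `2 q f g` to both sides.
-/

lemma sqrt_mul_le_abs_add_abs (s t : ℝ) : √(s * t) ≤ |s| + |t| := by
  refine Real.sqrt_le_iff.mpr ⟨by positivity, ?_⟩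
  calc s * t ≤ |s| * |t| := (le_abs_self _).trans_eq (abs_mul s t)
    _ ≤ (|s| + |t|) ^ 2 := by nlinarith [abs_nonneg s, abs_nonneg t]

lemma sq_sqrt_mul_sqrt_sub_sub {a a' c c' : ℝ} (ha : 0 ≤ a) (ha' : 0 ≤ a') (hc : 0 ≤ c)
    (hc' : 0 ≤ c') :
    (√c * (√a - √a') - √a * (√c - √c')) ^ 2 =
      2 * √(a * c) * (√(a * c) - √(a' * c')) - a * (c - c') - c * (a - a') :=
  calc (√c * (√a - √a') - √a * (√c - √c')) ^ 2
    _ = √a ^ 2 * √c' ^ 2 + √c ^ 2 * √a' ^ 2 - 2 * (√a * √c) * (√a' * √c') := by ring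
    _ = a * c' + c * a' - 2 * √(a * c) * √(a' * c') := by
      rw [Real.sq_sqrt ha, Real.sq_sqrt ha', Real.sq_sqrt hc, Real.sq_sqrt hc',
        Real.sqrt_mul ha, Real.sqrt_mul ha']
    _ = 2 * √(a * c) * (√(a * c) - √(a' * c')) - a * (c - c') - c * (a - a') := by
      linear_combination -2 * Real.mul_self_sqrt (mul_nonneg ha hc)

section

variable {X : Type} {b : X → X → ℝ} {f g u : X → ℝ}

lemma memF.of_abs_le_add (hf : memF b f) (hg : memF b g) (hu : ∀ z, |u z| ≤ |f z| + |g z|) :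
    memF b u := fun x => by
  refine Summable.of_norm_bounded ((hf x).norm.add (hg x).norm) fun y => ?_
  simp only [norm_mul, Real.norm_eq_abs, abs_abs, ← mul_add]
  exact mul_le_mul_of_nonneg_left (hu y) (abs_nonneg _)

lemma memF.sqrt_mul (hf : memF b f) (hg : memF b g) : memF b fun z => √(f z * g z) :=
  hf.of_abs_le_add hg fun z =>
    (abs_of_nonneg (Real.sqrt_nonneg _)).trans_le (sqrt_mul_le_abs_add_abs (f z) (g z))

lemma memF.summable_mul (hf : memF b f) (x : X) : Summable fun y => b x y * f y :=
  .of_norm <| by simpa only [norm_mul, Real.norm_eq_abs, abs_abs] using (hf x).norm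

lemma memF.hasSum_lap (hf : memF b f) {x : X} (hb : Summable (b x)) :
    HasSum (fun y => b x y * (f x - f y)) (lap b f x) :=
  Summable.hasSum <| by simpa only [mul_sub] using (hb.mul_right (f x)).sub (hf.summable_mul x)

lemma hasSum_sq_sqrt_mul_sqrt_sub_sub (hf_mem : memF b f) (hg_mem : memF b g) (hf : 0 ≤ f)
    (hg : 0 ≤ g) {x : X} (hb : Summable (b x)) :
    HasSum (fun y => b x y * (√(g x) * (√(f x) - √(f y)) - √(f x) * (√(g x) - √(g y))) ^ 2)
      (2 * √(f x * g x) * lap b (fun z => √(f z * g z)) x -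
        f x * lap b g x - g x * lap b f x) := by
  have hterm y : b x y * (√(g x) * (√(f x) - √(f y)) - √(f x) * (√(g x) - √(g y))) ^ 2 =
      2 * √(f x * g x) * (b x y * (√(f x * g x) - √(f y * g y))) -
        f x * (b x y * (g x - g y)) - g x * (b x y * (f x - f y)) := by
    rw [sq_sqrt_mul_sqrt_sub_sub (hf x) (hf y) (hg x) (hg y)]
    ring
  have hfg := ((hf_mem.sqrt_mul hg_mem).hasSum_lap hb).mul_left (2 * √(f x * g x))
  simp only [hterm]
  exact (hfg.sub ((hg_mem.hasSum_lap hb).mul_left (f x))).sub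
    ((hf_mem.hasSum_lap hb).mul_left (g x))

lemma sqrt_mul_schrod_sub_eq_lap (q : X → ℝ) {x : X} (hfg : 0 ≤ f x * g x) :
    2 * √(f x * g x) * schrod b q (fun z => √(f z * g z)) x -
        f x * schrod b q g x - g x * schrod b q f x =
      2 * √(f x * g x) * lap b (fun z => √(f z * g z)) x -
        f x * lap b g x - g x * lap b f x := by
  simp only [schrod]
  linear_combination 2 * q x * Real.mul_self_sqrt hfg

end

theorem stmt8_general {X : Type} {b : X → X → ℝ} (q : X → ℝ) (hb : ∀ x, Summable (b x))
    {f g : X → ℝ} (hf_mem : memF b f) (hg_mem : memF b g) (hf : 0 ≤ f) (hg : 0 ≤ g) :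
    memF b (fun z => √(f z * g z)) ∧
    (∀ x, Summable fun y =>
      b x y * (√(g x) * (√(f x) - √(f y)) - √(f x) * (√(g x) - √(g y))) ^ 2) ∧
    ∀ x, 2 * √(f x * g x) * schrod b q (fun z => √(f z * g z)) x =
      f x * schrod b q g x + g x * schrod b q f x +
        ∑' y, b x y * (√(g x) * (√(f x) - √(f y)) - √(f x) * (√(g x) - √(g y))) ^ 2 := by
  have hsum x := hasSum_sq_sqrt_mul_sqrt_sub_sub hf_mem hg_mem hf hg (hb x)
  refine ⟨hf_mem.sqrt_mul hg_mem, fun x => (hsum x).summable, fun x => ?_⟩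
  rw [(hsum x).tsum_eq, ← sqrt_mul_schrod_sub_eq_lap q (mul_nonneg (hf x) (hg x))]
  ring

/-- chain rule for the square root. -/
theorem stmt8 (X : Type) [Countable X] [Infinite X]
    (b : X → X → ℝ) (q : X → ℝ)
    (hb_nonneg : ∀ x y, 0 ≤ b x y) (hb_symm : ∀ x y, b x y = b y x)
    (hb_diag : ∀ x, b x x = 0) (hb_row : ∀ x, Summable fun y => b x y)
    (f g : X → ℝ) (hf_mem : memF b f) (hg_mem : memF b g)
    (hf_pos : ∀ x, 0 < f x) (hg_pos : ∀ x, 0 < g x) :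
    memF b (fun z => Real.sqrt (f z * g z)) ∧
    (∀ x : X, Summable fun y => b x y *
      (Real.sqrt (g x) * (Real.sqrt (f x) - Real.sqrt (f y)) -
        Real.sqrt (f x) * (Real.sqrt (g x) - Real.sqrt (g y))) ^ 2) ∧
    (∀ x : X,
      2 * Real.sqrt (f x * g x) * schrod b q (fun z => Real.sqrt (f z * g z)) x =
        f x * schrod b q g x + g x * schrod b q f x +
          ∑' y : X, b x y *
            (Real.sqrt (g x) * (Real.sqrt (f x) - Real.sqrt (f y)) -
              Real.sqrt (f x) * (Real.sqrt (g x) - Real.sqrt (g y))) ^ 2) :=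
  stmt8_general q hb_row hf_mem hg_mem (fun x => (hf_pos x).le) fun x => (hg_pos x).le
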